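/- Let ν ≥ 0, μ ≥ 0, and let u, B : ℝ × ℝ³ → ℝ³ and P : ℝ × ℝ³ → ℝ be smooth (jointly in (t,x)), horizontally periodic in x for each t, satisfying at every (t,x) ∈ ℝ × ℝ³ the viscous MHD system: ∂ₜu − νΔu + (curl u) × u + B × (curl B) + ∇P = 0, div u = 0, ∂ₜB − μΔB = curl(u × B), div B = 0. Assume for every t that u(t,·) satisfies the Navier-slip boundary condition (u₃ = ∂₃u₁ = ∂₃u₂ = 0 on ∂Ω) and B(t,·) satisfies the insulating boundary condition (B₁ = B₂ = 0 on ∂Ω). Then the energy E(t) = ∫_Q (|u(t,x)|² + |B(t,x)|²) dx is differentiable in t and satisfies, for every t, E′(t) = −2ν ∫_Q |curl u(t,x)|² dx − 2μ ∫_Q |curl B(t,x)|² dx. -/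

import Mathlib

noncomputable section

open MeasureTheory

/-- Points/vectors in ℝ³, indexed by `Fin 3` (so index `0,1,2` stand for coordinates `1,2,3`). -/
abbrev V3 : Type := Fin 3 → ℝ

/-- Partial derivative in the `i`-th coordinate direction. -/
def pd (i : Fin 3) (f : V3 → ℝ) (x : V3) : ℝ := fderiv ℝ f x (Pi.single i 1)

/-- Divergence of a vector field. -/
def vdiv (u : V3 → V3) (x : V3) : ℝ :=
  pd 0 (fun y => u y 0) x + pd 1 (fun y => u y 1) x + pd 2 (fun y => u y 2) x

/-- Curl of a vector field. -/
def vcurl (u : V3 → V3) (x : V3) : V3 :=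
  ![pd 1 (fun y => u y 2) x - pd 2 (fun y => u y 1) x,
    pd 2 (fun y => u y 0) x - pd 0 (fun y => u y 2) x,
    pd 0 (fun y => u y 1) x - pd 1 (fun y => u y 0) x]

/-- Laplacian of a scalar function. -/
def lap (f : V3 → ℝ) (x : V3) : ℝ :=
  pd 0 (pd 0 f) x + pd 1 (pd 1 f) x + pd 2 (pd 2 f) x

/-- Componentwise Laplacian of a vector field. -/
def vlap (u : V3 → V3) (x : V3) : V3 := fun i => lap (fun y => u y i) x

/-- Advective derivative `(u·∇)V`. -/
def adv (u V : V3 → V3) (x : V3) : V3 := fun i =>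
  u x 0 * pd 0 (fun y => V y i) x + u x 1 * pd 1 (fun y => V y i) x +
    u x 2 * pd 2 (fun y => V y i) x

/-- Cross product in ℝ³. -/
def cross (a b : V3) : V3 :=
  ![a 1 * b 2 - a 2 * b 1, a 2 * b 0 - a 0 * b 2, a 0 * b 1 - a 1 * b 0]

/-- Dot product in ℝ³. -/
def dot (a b : V3) : ℝ := a 0 * b 0 + a 1 * b 1 + a 2 * b 2

/-- Gradient of a scalar function. -/
def grad (f : V3 → ℝ) (x : V3) : V3 := fun i => pd i f x

/-- The boundary `∂Ω = {x : x₃ = 0 or x₃ = 1}`. -/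
def onBdry (x : V3) : Prop := x 2 = 0 ∨ x 2 = 1

/-- Horizontal periodicity (period 1 in x₁ and x₂) of a scalar function. -/
def hperS (f : V3 → ℝ) : Prop :=
  (∀ x, f (x + Pi.single 0 1) = f x) ∧ (∀ x, f (x + Pi.single 1 1) = f x)

/-- Horizontal periodicity (period 1 in x₁ and x₂) of a vector field. -/
def hperV (u : V3 → V3) : Prop :=
  (∀ x, u (x + Pi.single 0 1) = u x) ∧ (∀ x, u (x + Pi.single 1 1) = u x)

/-- The unit cube `Q = [0,1]³`. -/
def Q3 : Set V3 := Set.Icc 0 1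

/-!
The balance laws come from one integration by parts: since `div (v × w) = w · curl v - v · curl w`,
the curl is symmetric on the horizontally periodic slab as soon as `(v × w)₃ = 0` on the boundary.
With `(v, w) = (curl u, u)` this turns the viscous term into `-ν ∫ |curl u|²`, the slip condition
being exactly that `curl u` is normal to the boundary. With `(v, w) = (E, B)`, where
`E = μ curl B - u × B` is the electric field, so that `∂ₜB = -curl E`, it is Poynting's theorem.
The work `∫ u · (B × curl B)` of the Lorentz force is then the only exchange between the two
energies, and it cancels in their sum.
-/

section ParametricIntegral

variable {𝕜 X F : Type*} [RCLike 𝕜] [NormedAddCommGroup F] [NormedSpace ℝ F] [NormedSpace 𝕜 F]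
  [TopologicalSpace X] [T2Space X] [MeasurableSpace X] [OpensMeasurableSpace X]
  [SecondCountableTopologyEither X F] {μ : Measure X} [IsFiniteMeasureOnCompacts μ]

theorem hasDerivAt_setIntegral_of_isCompact {K : Set X} (hK : IsCompact K) {g g' : 𝕜 → X → F}
    (hg : ∀ s, Continuous (g s)) (hg' : Continuous (Function.uncurry g'))
    (hderiv : ∀ s x, HasDerivAt (fun r => g r x) (g' s x) s) (t : 𝕜) :
    HasDerivAt (fun s => ∫ x in K, g s x ∂μ) (∫ x in K, g' t x ∂μ) t := by
  obtain ⟨C, hC⟩ :=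
    ((isCompact_closedBall t 1).prod hK).exists_bound_of_continuousOn hg'.continuousOn
  have hbound : ∀ᵐ x ∂μ.restrict K, ∀ s ∈ Metric.closedBall t 1, ‖g' s x‖ ≤ C :=
    ae_restrict_of_forall_mem hK.measurableSet fun x hx s hs => hC (s, x) ⟨hs, hx⟩
  exact (hasDerivAt_integral_of_dominated_loc_of_deriv_le
    (Metric.closedBall_mem_nhds t one_pos)
    (.of_forall fun s => (hg s).aestronglyMeasurable)
    ((hg t).continuousOn.integrableOn_compact hK)
    (hg'.comp (Continuous.prodMk_right t)).aestronglyMeasurable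
    hbound (integrableOn_const hK.measure_lt_top.ne)
    (.of_forall fun x s _ => hderiv s x)).2

end ParametricIntegral

section Calculus

theorem contDiff_slice_of_uncurry {𝕜 G E F : Type*} [NontriviallyNormedField 𝕜]
    [NormedAddCommGroup G] [NormedSpace 𝕜 G] [NormedAddCommGroup E] [NormedSpace 𝕜 E]
    [NormedAddCommGroup F] [NormedSpace 𝕜 F] {n : WithTop ℕ∞} {f : G → E → F}
    (hf : ContDiff 𝕜 n (Function.uncurry f)) (a : G) : ContDiff 𝕜 n (f a) :=
  hf.comp (contDiff_prodMk_right a)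

theorem insertNth_eq_insertNth_zero_add_single {M : Type*} [AddZeroClass M] {n : ℕ}
    (i : Fin (n + 1)) (a : M) (y : Fin n → M) :
    (i.insertNth a y : Fin (n + 1) → M) = (i.insertNth 0 y : Fin (n + 1) → M) + Pi.single i a := by
  ext j
  cases j using Fin.succAboveCases i <;> simp

theorem setIntegral_divergence_eq_zero_of_faces_eq {n : ℕ} {a b : Fin (n + 1) → ℝ} (hab : a ≤ b)
    {F : (Fin (n + 1) → ℝ) → Fin (n + 1) → ℝ} (hF : ContDiff ℝ 1 F)
    (hfaces : ∀ i y, F (i.insertNth (b i) y) i = F (i.insertNth (a i) y) i) :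
    ∫ x in Set.Icc a b, ∑ i, fderiv ℝ F x (Pi.single i 1) i = 0 := by
  have hdiv : Continuous fun x => ∑ i, fderiv ℝ F x (Pi.single i 1) i := by
    have := hF.continuous_fderiv one_ne_zero
    fun_prop
  rw [integral_divergence_of_hasFDerivAt_off_countable a b hab F (fderiv ℝ F) ∅
    Set.countable_empty hF.continuous.continuousOn
    (fun x _ => (hF.differentiable one_ne_zero x).hasFDerivAt) hdiv.integrableOn_Icc]
  simp only [hfaces, sub_self, Finset.sum_const_zero]

end Calculus

section PartialDerivatives

variable {f g : V3 → ℝ} {x : V3} {n : WithTop ℕ∞}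

theorem pd_add (i : Fin 3) (hf : DifferentiableAt ℝ f x) (hg : DifferentiableAt ℝ g x) :
    pd i (fun y => f y + g y) x = pd i f x + pd i g x := by
  simp only [pd, fderiv_fun_add hf hg, add_apply]

theorem pd_sub (i : Fin 3) (hf : DifferentiableAt ℝ f x) (hg : DifferentiableAt ℝ g x) :
    pd i (fun y => f y - g y) x = pd i f x - pd i g x := by
  simp only [pd, fderiv_fun_sub hf hg, sub_apply]

theorem pd_mul (i : Fin 3) (hf : DifferentiableAt ℝ f x) (hg : DifferentiableAt ℝ g x) :
    pd i (fun y => f y * g y) x = f x * pd i g x + g x * pd i f x := by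
  simp only [pd, fderiv_fun_mul hf hg, add_apply, smul_apply, smul_eq_mul]

theorem pd_const_mul (i : Fin 3) (c : ℝ) (hf : DifferentiableAt ℝ f x) :
    pd i (fun y => c * f y) x = c * pd i f x := by
  simp only [pd, fderiv_const_mul hf, smul_apply, smul_eq_mul]

theorem pd_apply {u : V3 → V3} (hu : DifferentiableAt ℝ u x) (i j : Fin 3) :
    pd i (fun y => u y j) x = fderiv ℝ u x (Pi.single i 1) j := by
  simp only [pd, fderiv_apply hu, ContinuousLinearMap.comp_apply, ContinuousLinearMap.proj_apply]

theorem pd_comm (hf : ContDiffAt ℝ 2 f x) (i j : Fin 3) :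
    pd i (pd j f) x = pd j (pd i f) x := by
  have hdf : DifferentiableAt ℝ (fderiv ℝ f) x :=
    (hf.fderiv_right (m := 1) (by norm_num)).differentiableAt one_ne_zero
  have hpd (k l : Fin 3) :
      pd k (pd l f) x = fderiv ℝ (fderiv ℝ f) x (Pi.single k 1) (Pi.single l 1) := by
    change fderiv ℝ (fun y => fderiv ℝ f y (Pi.single l 1)) x (Pi.single k 1) = _
    simp [fderiv_clm_apply hdf (differentiableAt_const _)]
  rw [hpd, hpd]
  exact hf.isSymmSndFDerivAt (by simp) _ _

theorem contDiff_pd (hf : ContDiff ℝ (n + 1) f) (i : Fin 3) : ContDiff ℝ n (pd i f) :=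
  (hf.fderiv_right le_rfl).clm_apply contDiff_const

theorem pd_periodic {c : V3} (hf : Function.Periodic f c) (i : Fin 3) :
    Function.Periodic (pd i f) c := fun x => by
  simp only [pd, ← fderiv_comp_add_right, hf _]

theorem pd_eq_zero_of_onBdry (hf : DifferentiableAt ℝ f x) (hbdry : ∀ y, onBdry y → f y = 0)
    {i : Fin 3} (hi : i ≠ 2) (hx : onBdry x) : pd i f x = 0 := by
  have hline (s : ℝ) : f (x + s • Pi.single i 1) = 0 :=
    hbdry _ (by simpa [onBdry, hi.symm] using hx)
  have hpd : pd i f x = lineDeriv ℝ f x (Pi.single i 1) := (hf.lineDeriv_eq_fderiv).symm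
  rw [hpd, lineDeriv, funext hline, deriv_const]

end PartialDerivatives

section VectorCalculus

variable {u v w : V3 → V3} {x : V3} {n : WithTop ℕ∞}

theorem contDiff_cross (hv : ContDiff ℝ n v) (hw : ContDiff ℝ n w) :
    ContDiff ℝ n fun x => cross (v x) (w x) := by
  refine contDiff_pi.2 fun i => ?_
  fin_cases i <;>
    simp only [cross, Matrix.cons_val, Fin.zero_eta, Fin.mk_one, Fin.reduceFinMk] <;> fun_prop

@[fun_prop]
theorem continuous_dot {X : Type*} [TopologicalSpace X] {v w : X → V3} (hv : Continuous v)
    (hw : Continuous w) : Continuous fun x => dot (v x) (w x) := by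
  unfold dot
  fun_prop

theorem contDiff_vcurl (hu : ContDiff ℝ (n + 1) u) : ContDiff ℝ n (vcurl u) := by
  have hpd (i j : Fin 3) : ContDiff ℝ n (pd i fun y => u y j) := contDiff_pd (by fun_prop) i
  refine contDiff_pi.2 fun i => ?_
  fin_cases i
  · exact (hpd 1 2).sub (hpd 2 1)
  · exact (hpd 2 0).sub (hpd 0 2)
  · exact (hpd 0 1).sub (hpd 1 0)

theorem continuous_vcurl (hu : ContDiff ℝ 1 u) : Continuous (vcurl u) :=
  (contDiff_vcurl (n := 0) (by simpa using hu)).continuous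

theorem continuous_grad {p : V3 → ℝ} (hp : ContDiff ℝ 1 p) : Continuous (grad p) :=
  continuous_pi fun i => (contDiff_pd (n := 0) (by simpa using hp) i).continuous

theorem vcurl_periodic {c : V3} (hu : Function.Periodic u c) :
    Function.Periodic (vcurl u) c := fun x => by
  have hpd (i j : Fin 3) : pd i (fun y => u y j) (x + c) = pd i (fun y => u y j) x :=
    pd_periodic (fun y => congrFun (hu y) j) i x
  simp only [vcurl, hpd]

theorem hperV_vcurl (hu : hperV u) : hperV (vcurl u) :=
  ⟨vcurl_periodic hu.1, vcurl_periodic hu.2⟩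

theorem hperV_cross (hv : hperV v) (hw : hperV w) : hperV fun x => cross (v x) (w x) :=
  ⟨fun x => by simp only [hv.1 x, hw.1 x], fun x => by simp only [hv.2 x, hw.2 x]⟩

theorem vdiv_eq_sum (hu : DifferentiableAt ℝ u x) :
    vdiv u x = ∑ i, fderiv ℝ u x (Pi.single i 1) i := by
  simp only [vdiv, pd_apply hu, Fin.sum_univ_three]

theorem vdiv_smul {p : V3 → ℝ} (hp : DifferentiableAt ℝ p x) (hu : DifferentiableAt ℝ u x) :
    vdiv (fun y => p y • u y) x = p x * vdiv u x + dot (u x) (grad p x) := by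
  have hui (i : Fin 3) : DifferentiableAt ℝ (fun y => u y i) x := by fun_prop
  simp only [vdiv, dot, grad, Pi.smul_apply, smul_eq_mul, pd_mul _ hp (hui _)]
  ring

theorem vdiv_cross (hv : DifferentiableAt ℝ v x) (hw : DifferentiableAt ℝ w x) :
    vdiv (fun y => cross (v y) (w y)) x = dot (w x) (vcurl v x) - dot (v x) (vcurl w x) := by
  have hvi (i : Fin 3) : DifferentiableAt ℝ (fun y => v y i) x := by fun_prop
  have hwi (i : Fin 3) : DifferentiableAt ℝ (fun y => w y i) x := by fun_prop
  have hpd (k i j : Fin 3) : pd k (fun y => v y i * w y j - v y j * w y i) x =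
      v x i * pd k (fun y => w y j) x + w x j * pd k (fun y => v y i) x
        - (v x j * pd k (fun y => w y i) x + w x i * pd k (fun y => v y j) x) := by
    rw [pd_sub k ((hvi i).fun_mul (hwi j)) ((hvi j).fun_mul (hwi i)),
      pd_mul k (hvi i) (hwi j), pd_mul k (hvi j) (hwi i)]
  simp only [vdiv, cross, dot, vcurl, Matrix.cons_val, hpd]
  ring

theorem vcurl_sub (hv : DifferentiableAt ℝ v x) (hw : DifferentiableAt ℝ w x) :
    vcurl (fun y => v y - w y) x = vcurl v x - vcurl w x := by
  have hvi (i : Fin 3) : DifferentiableAt ℝ (fun y => v y i) x := by fun_prop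
  have hwi (i : Fin 3) : DifferentiableAt ℝ (fun y => w y i) x := by fun_prop
  ext i
  fin_cases i <;>
    simp only [vcurl, Pi.sub_apply, Matrix.cons_val, Fin.zero_eta, Fin.mk_one, Fin.reduceFinMk,
      pd_sub _ (hvi _) (hwi _)] <;>
    ring

theorem vcurl_const_smul (c : ℝ) (hu : DifferentiableAt ℝ u x) :
    vcurl (fun y => c • u y) x = c • vcurl u x := by
  have hui (i : Fin 3) : DifferentiableAt ℝ (fun y => u y i) x := by fun_prop
  ext i
  fin_cases i <;>
    simp only [vcurl, Pi.smul_apply, smul_eq_mul, Matrix.cons_val, Fin.zero_eta, Fin.mk_one,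
      Fin.reduceFinMk, pd_const_mul _ c (hui _)] <;>
    ring

theorem vcurl_vcurl (hu : ContDiff ℝ 2 u) :
    vcurl (vcurl u) x = grad (vdiv u) x - vlap u x := by
  have hui (i : Fin 3) : ContDiff ℝ 2 fun y => u y i := by fun_prop
  have hpd (i j : Fin 3) : DifferentiableAt ℝ (pd i fun y => u y j) x :=
    (contDiff_pd (n := 1) (hui j) i).differentiable one_ne_zero x
  have hsub (k i j : Fin 3) :
      pd k (fun y => pd i (fun z => u z j) y - pd j (fun z => u z i) y) x =
        pd k (pd i fun z => u z j) x - pd k (pd j fun z => u z i) x :=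
    pd_sub k (hpd i j) (hpd j i)
  have hgrad (k : Fin 3) : pd k (vdiv u) x = pd k (pd 0 fun z => u z 0) x
      + pd k (pd 1 fun z => u z 1) x + pd k (pd 2 fun z => u z 2) x :=
    (pd_add k ((hpd 0 0).fun_add (hpd 1 1)) (hpd 2 2)).trans
      (congrArg (· + _) (pd_add k (hpd 0 0) (hpd 1 1)))
  have hcomm (i j k : Fin 3) := pd_comm (x := x) (hui k).contDiffAt i j
  ext i
  fin_cases i <;>
    simp only [Pi.sub_apply, vcurl, vlap, lap, grad, Matrix.cons_val, Fin.zero_eta, Fin.mk_one,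
      Fin.reduceFinMk, hsub, hgrad]
  · linear_combination hcomm 1 0 1 + hcomm 2 0 2
  · linear_combination hcomm 0 1 0 + hcomm 2 1 2
  · linear_combination hcomm 0 2 0 + hcomm 1 2 1

theorem vlap_eq_neg_vcurl_vcurl (hu : ContDiff ℝ 2 u) (hdiv : ∀ y, vdiv u y = 0) :
    vlap u x = -vcurl (vcurl u) x := by
  have hgrad : grad (vdiv u) x = 0 := by
    ext i
    simp [grad, pd, funext hdiv]
  rw [vcurl_vcurl hu, hgrad, zero_sub, neg_neg]

/-- The Navier-slip condition `u · n = 0`, `(curl u) × n = 0` on `∂Ω`, with the second half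
written as the vanishing of `∂₃u₁` and `∂₃u₂`. -/
def NavierSlip (u : V3 → V3) : Prop :=
  ∀ y, onBdry y →
    u y 2 = 0 ∧ pd 2 (fun z => u z 0) y = 0 ∧ pd 2 (fun z => u z 1) y = 0

/-- The insulating condition `B × n = 0` on `∂Ω`: the tangential components of `B` vanish. -/
def Insulating (B : V3 → V3) : Prop :=
  ∀ y, onBdry y → B y 0 = 0 ∧ B y 1 = 0

/-- The electric field `E = μ curl B - v × B` that Ohm's law assigns to a magnetic field `B` in a
medium of resistivity `μ` moving with velocity `v`. -/
def electricField (mu : ℝ) (v B : V3 → V3) (x : V3) : V3 :=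
  mu • vcurl B x - cross (v x) (B x)

theorem contDiff_electricField (mu : ℝ) {B : V3 → V3} (hv : ContDiff ℝ n v)
    (hB : ContDiff ℝ (n + 1) B) : ContDiff ℝ n (electricField mu v B) :=
  ((contDiff_vcurl hB).const_smul mu).sub (contDiff_cross hv (hB.of_le le_self_add))

theorem hperV_electricField (mu : ℝ) {B : V3 → V3} (hv : hperV v) (hB : hperV B) :
    hperV (electricField mu v B) :=
  ⟨fun x => by simp only [electricField, (hperV_vcurl hB).1 x, hv.1 x, hB.1 x],
    fun x => by simp only [electricField, (hperV_vcurl hB).2 x, hv.2 x, hB.2 x]⟩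

theorem vcurl_electricField (mu : ℝ) {B : V3 → V3} (hv : ContDiff ℝ 1 v) (hB : ContDiff ℝ 2 B)
    (hdiv : ∀ y, vdiv B y = 0) :
    vcurl (electricField mu v B) x = -(mu • vlap B x) - vcurl (fun y => cross (v y) (B y)) x := by
  have hcurl : DifferentiableAt ℝ (vcurl B) x :=
    (contDiff_vcurl (n := 1) hB).differentiable one_ne_zero x
  have hcross : DifferentiableAt ℝ (fun y => cross (v y) (B y)) x :=
    (contDiff_cross hv (hB.of_le one_le_two)).differentiable one_ne_zero x
  change vcurl (fun y => mu • vcurl B y - cross (v y) (B y)) x = _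
  rw [vcurl_sub (hcurl.fun_const_smul mu) hcross, vcurl_const_smul mu hcurl,
    vlap_eq_neg_vcurl_vcurl hB hdiv, smul_neg, neg_neg]

theorem vcurl_tangential_eq_zero_of_slip (hu : DifferentiableAt ℝ u x)
    (hslip : NavierSlip u) (hx : onBdry x) : vcurl u x 0 = 0 ∧ vcurl u x 1 = 0 := by
  have hpd {i : Fin 3} (hi : i ≠ 2) : pd i (fun z => u z 2) x = 0 :=
    pd_eq_zero_of_onBdry (by fun_prop) (fun y hy => (hslip y hy).1) hi hx
  simp [vcurl, hslip x hx, hpd]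

end VectorCalculus

section SlabIntegrals

variable {u v w : V3 → V3}

theorem integrableOn_Q3 {f : V3 → ℝ} (hf : Continuous f) : IntegrableOn f Q3 :=
  hf.integrableOn_Icc

theorem setIntegral_vdiv_eq_zero (hu : ContDiff ℝ 1 u) (hper : hperV u)
    (hnormal : ∀ x, onBdry x → u x 2 = 0) : ∫ x in Q3, vdiv u x = 0 := by
  simp only [vdiv_eq_sum (hu.differentiable one_ne_zero _)]
  refine setIntegral_divergence_eq_zero_of_faces_eq zero_le_one hu fun i y => ?_
  change u (i.insertNth 1 y) i = u (i.insertNth 0 y) i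
  fin_cases i
  · exact congrFun (insertNth_eq_insertNth_zero_add_single 0 1 y ▸ hper.1 _) 0
  · exact congrFun (insertNth_eq_insertNth_zero_add_single 1 1 y ▸ hper.2 _) 1
  · have htop : onBdry ((2 : Fin 3).insertNth (1 : ℝ) y) := .inr (Fin.insertNth_apply_same ..)
    have hbot : onBdry ((2 : Fin 3).insertNth (0 : ℝ) y) := .inl (Fin.insertNth_apply_same ..)
    exact (hnormal _ htop).trans (hnormal _ hbot).symm

theorem setIntegral_dot_vcurl_comm (hv : ContDiff ℝ 1 v) (hw : ContDiff ℝ 1 w)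
    (hvper : hperV v) (hwper : hperV w) (hnormal : ∀ x, onBdry x → cross (v x) (w x) 2 = 0) :
    ∫ x in Q3, dot (w x) (vcurl v x) = ∫ x in Q3, dot (v x) (vcurl w x) := by
  have hflux := setIntegral_vdiv_eq_zero (contDiff_cross hv hw) (hperV_cross hvper hwper) hnormal
  have := continuous_vcurl hv
  have := continuous_vcurl hw
  simp only [vdiv_cross (hv.differentiable one_ne_zero _) (hw.differentiable one_ne_zero _)]
    at hflux
  rwa [integral_sub (integrableOn_Q3 (by fun_prop)) (integrableOn_Q3 (by fun_prop)),
    sub_eq_zero] at hflux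

theorem setIntegral_dot_grad_eq_zero {p : V3 → ℝ} (hu : ContDiff ℝ 1 u) (hp : ContDiff ℝ 1 p)
    (huper : hperV u) (hpper : hperS p) (hdiv : ∀ x, vdiv u x = 0)
    (hnormal : ∀ x, onBdry x → u x 2 = 0) : ∫ x in Q3, dot (u x) (grad p x) = 0 := by
  have hper : hperV fun x => p x • u x :=
    ⟨fun x => by simp only [hpper.1 x, huper.1 x], fun x => by simp only [hpper.2 x, huper.2 x]⟩
  have hflux : ∫ x in Q3, vdiv (fun y => p y • u y) x = 0 :=
    setIntegral_vdiv_eq_zero (hp.smul hu) hper fun x hx => by simp [hnormal x hx]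
  simpa only [vdiv_smul (hp.differentiable one_ne_zero _) (hu.differentiable one_ne_zero _), hdiv,
    mul_zero, zero_add] using hflux

theorem setIntegral_dot_vcurl_vcurl_of_slip (hu : ContDiff ℝ 2 u) (hper : hperV u)
    (hslip : NavierSlip u) :
    ∫ x in Q3, dot (u x) (vcurl (vcurl u) x) = ∫ x in Q3, dot (vcurl u x) (vcurl u x) := by
  have hu1 : ContDiff ℝ 1 u := hu.of_le one_le_two
  refine setIntegral_dot_vcurl_comm (contDiff_vcurl hu) hu1 (hperV_vcurl hper) hper fun x hx => ?_
  obtain ⟨h0, h1⟩ := vcurl_tangential_eq_zero_of_slip (hu1.differentiable one_ne_zero x) hslip hx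
  simp [cross, h0, h1]

end SlabIntegrals

section EnergyBalance

variable {u B : ℝ → V3 → V3} {t : ℝ}

theorem hasDerivAt_dot_self {a : ℝ → V3} {a' : V3} (ha : HasDerivAt a a' t) :
    HasDerivAt (fun s => dot (a s) (a s)) (2 * dot (a t) a') t := by
  have hai (i : Fin 3) := (hasDerivAt_pi.1 ha i).fun_mul (hasDerivAt_pi.1 ha i)
  refine (((hai 0).fun_add (hai 1)).fun_add (hai 2)).congr_deriv ?_
  simp only [dot]
  ring

theorem hasDerivAt_setIntegral_dot_self (hu : ContDiff ℝ 1 (Function.uncurry u)) (t : ℝ) :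
    HasDerivAt (fun s => ∫ x in Q3, dot (u s x) (u s x))
      (2 * ∫ x in Q3, dot (u t x) fun i => deriv (fun s => u s x i) t) t := by
  let v : ℝ → V3 → V3 := fun s x => fderiv ℝ (Function.uncurry u) (s, x) (1, 0)
  have hderiv (s : ℝ) (x : V3) : HasDerivAt (fun r => u r x) (v s x) s :=
    (hu.differentiable one_ne_zero (s, x)).hasFDerivAt.comp_hasDerivAt (f := fun r => (r, x)) s
      ((hasDerivAt_id s).prodMk (hasDerivAt_const s x))
  have hv : Continuous (Function.uncurry v) :=
    (hu.continuous_fderiv one_ne_zero).clm_apply continuous_const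
  have hpower : Continuous (Function.uncurry fun s x => 2 * dot (u s x) (v s x)) :=
    (continuous_dot hu.continuous hv).const_mul 2
  have hus (s : ℝ) : Continuous (u s) := (contDiff_slice_of_uncurry hu s).continuous
  refine (hasDerivAt_setIntegral_of_isCompact isCompact_Icc
    (fun s => continuous_dot (hus s) (hus s)) hpower
    (fun s x => hasDerivAt_dot_self (hderiv s x)) t).congr_deriv ?_
  simp only [(hasDerivAt_pi.1 (hderiv t _) _).deriv]
  exact integral_const_mul _ _

theorem hasDerivAt_kineticEnergy {nu : ℝ} {p : V3 → ℝ} {f : V3 → V3}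
    (hu : ContDiff ℝ 1 (Function.uncurry u)) (hut : ContDiff ℝ 2 (u t)) (hp : ContDiff ℝ 1 p)
    (hf : Continuous f) (huper : hperV (u t)) (hpper : hperS p)
    (hmom : ∀ x i, deriv (fun s => u s x i) t - nu * vlap (u t) x i
      + cross (vcurl (u t) x) (u t x) i + grad p x i = f x i)
    (hdiv : ∀ x, vdiv (u t) x = 0) (hslip : NavierSlip (u t)) :
    HasDerivAt (fun s => ∫ x in Q3, dot (u s x) (u s x))
      (-2 * nu * (∫ x in Q3, dot (vcurl (u t) x) (vcurl (u t) x))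
        + 2 * ∫ x in Q3, dot (u t x) (f x)) t := by
  have hut1 : ContDiff ℝ 1 (u t) := hut.of_le one_le_two
  have hpower (x : V3) : (dot (u t x) fun i => deriv (fun s => u s x i) t) =
      dot (u t x) (f x) - nu * dot (u t x) (vcurl (vcurl (u t)) x) - dot (u t x) (grad p x) := by
    have hlap := congrFun (vlap_eq_neg_vcurl_vcurl (x := x) hut hdiv)
    have hm := hmom x
    simp only [hlap, Pi.neg_apply] at hm
    have hacc (i : Fin 3) : deriv (fun s => u s x i) t = f x i - nu * vcurl (vcurl (u t)) x i
        - cross (vcurl (u t) x) (u t x) i - grad p x i := by linarith [hm i]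
    simp only [dot, hacc, cross, Matrix.cons_val]
    ring
  have hdissipation := setIntegral_dot_vcurl_vcurl_of_slip hut huper hslip
  have hpressure := setIntegral_dot_grad_eq_zero hut1 hp huper hpper hdiv fun x hx => (hslip x hx).1
  have := continuous_vcurl (contDiff_vcurl hut)
  have := continuous_grad hp
  have := hut1.continuous
  refine (hasDerivAt_setIntegral_dot_self hu t).congr_deriv ?_
  simp only [hpower]
  rw [integral_sub (integrableOn_Q3 (by fun_prop)) (integrableOn_Q3 (by fun_prop)),
    integral_sub (integrableOn_Q3 (by fun_prop)) (integrableOn_Q3 (by fun_prop)),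
    integral_const_mul, hdissipation, hpressure]
  ring

theorem hasDerivAt_magneticEnergy_of_faraday {E : V3 → V3}
    (hB : ContDiff ℝ 1 (Function.uncurry B)) (hE : ContDiff ℝ 1 E)
    (hBper : hperV (B t)) (hEper : hperV E)
    (hfaraday : ∀ x i, deriv (fun s => B s x i) t = -vcurl E x i)
    (hinsul : Insulating (B t)) :
    HasDerivAt (fun s => ∫ x in Q3, dot (B s x) (B s x))
      (-2 * ∫ x in Q3, dot (E x) (vcurl (B t) x)) t := by
  have hBt : ContDiff ℝ 1 (B t) := contDiff_slice_of_uncurry hB t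
  have hpower (x : V3) : (dot (B t x) fun i => deriv (fun s => B s x i) t) =
      -dot (B t x) (vcurl E x) := by
    simp only [dot, hfaraday]
    ring
  have hnormal (x : V3) (hx : onBdry x) : cross (E x) (B t x) 2 = 0 := by
    simp [cross, hinsul x hx]
  refine (hasDerivAt_setIntegral_dot_self hB t).congr_deriv ?_
  simp only [hpower]
  rw [integral_neg, setIntegral_dot_vcurl_comm hE hBt hEper hBper hnormal]
  ring

theorem hasDerivAt_magneticEnergy {mu : ℝ} {v : V3 → V3}
    (hB : ContDiff ℝ 1 (Function.uncurry B)) (hBt : ContDiff ℝ 2 (B t)) (hv : ContDiff ℝ 1 v)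
    (hBper : hperV (B t)) (hvper : hperV v)
    (hind : ∀ x i, deriv (fun s => B s x i) t - mu * vlap (B t) x i
      = vcurl (fun y => cross (v y) (B t y)) x i)
    (hdiv : ∀ x, vdiv (B t) x = 0)
    (hinsul : Insulating (B t)) :
    HasDerivAt (fun s => ∫ x in Q3, dot (B s x) (B s x))
      (-2 * mu * (∫ x in Q3, dot (vcurl (B t) x) (vcurl (B t) x))
        + 2 * ∫ x in Q3, dot (v x) (cross (B t x) (vcurl (B t) x))) t := by
  have hBt1 : ContDiff ℝ 1 (B t) := hBt.of_le one_le_two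
  have hcurl : ContDiff ℝ 1 (vcurl (B t)) := contDiff_vcurl hBt
  have hfaraday (x : V3) (i : Fin 3) :
      deriv (fun s => B s x i) t = -vcurl (electricField mu v (B t)) x i := by
    rw [vcurl_electricField mu hv hBt hdiv]
    simp only [Pi.sub_apply, Pi.neg_apply, Pi.smul_apply, smul_eq_mul]
    linarith [hind x i]
  have hpower (x : V3) : dot (electricField mu v (B t) x) (vcurl (B t) x) =
      mu * dot (vcurl (B t) x) (vcurl (B t) x) - dot (v x) (cross (B t x) (vcurl (B t) x)) := by
    simp only [electricField, dot, cross, Matrix.cons_val, Pi.sub_apply, Pi.smul_apply, smul_eq_mul]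
    ring
  have hlorentz : Continuous fun x => cross (B t x) (vcurl (B t) x) :=
    (contDiff_cross hBt1 hcurl).continuous
  have := hcurl.continuous
  have := hv.continuous
  refine (hasDerivAt_magneticEnergy_of_faraday hB (contDiff_electricField mu hv hBt) hBper
    (hperV_electricField mu hvper hBper) hfaraday hinsul).congr_deriv ?_
  simp only [hpower]
  rw [integral_sub (integrableOn_Q3 (by fun_prop)) (integrableOn_Q3 (by fun_prop)),
    integral_const_mul]
  ring

theorem stmt_16_general (nu mu : ℝ) {p : V3 → ℝ}
    (hu : ContDiff ℝ 1 (Function.uncurry u)) (hut : ContDiff ℝ 2 (u t))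
    (hB : ContDiff ℝ 1 (Function.uncurry B)) (hBt : ContDiff ℝ 2 (B t))
    (hp : ContDiff ℝ 1 p) (huper : hperV (u t)) (hBper : hperV (B t)) (hpper : hperS p)
    (hmom : ∀ x i, deriv (fun s => u s x i) t - nu * vlap (u t) x i
      + cross (vcurl (u t) x) (u t x) i + cross (B t x) (vcurl (B t) x) i + grad p x i = 0)
    (hdivu : ∀ x, vdiv (u t) x = 0)
    (hind : ∀ x i, deriv (fun s => B s x i) t - mu * vlap (B t) x i
      = vcurl (fun y => cross (u t y) (B t y)) x i)
    (hdivB : ∀ x, vdiv (B t) x = 0)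
    (hslip : NavierSlip (u t))
    (hinsul : Insulating (B t)) :
    HasDerivAt (fun s => ∫ x in Q3, (dot (u s x) (u s x) + dot (B s x) (B s x)))
      (-2 * nu * (∫ x in Q3, dot (vcurl (u t) x) (vcurl (u t) x))
        - 2 * mu * (∫ x in Q3, dot (vcurl (B t) x) (vcurl (B t) x))) t := by
  have hlorentz : Continuous fun x => -cross (B t x) (vcurl (B t) x) :=
    (contDiff_cross (hBt.of_le one_le_two) (contDiff_vcurl hBt)).continuous.neg
  have hkinetic := hasDerivAt_kineticEnergy hu hut hp hlorentz huper hpper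
    (fun x i => by rw [Pi.neg_apply]; linarith [hmom x i]) hdivu hslip
  have hmagnetic := hasDerivAt_magneticEnergy hB hBt (hut.of_le one_le_two) hBper huper hind
    hdivB hinsul
  have hsplit (s : ℝ) : ∫ x in Q3, (dot (u s x) (u s x) + dot (B s x) (B s x)) =
      (∫ x in Q3, dot (u s x) (u s x)) + ∫ x in Q3, dot (B s x) (B s x) := by
    have hus : Continuous (u s) := (contDiff_slice_of_uncurry hu s).continuous
    have hBs : Continuous (B s) := (contDiff_slice_of_uncurry hB s).continuous
    exact integral_add (integrableOn_Q3 (by fun_prop)) (integrableOn_Q3 (by fun_prop))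
  have hwork (x : V3) : dot (u t x) (-cross (B t x) (vcurl (B t) x)) =
      -dot (u t x) (cross (B t x) (vcurl (B t) x)) := by
    simp only [dot, Pi.neg_apply]
    ring
  simp only [hsplit]
  refine (hkinetic.fun_add hmagnetic).congr_deriv ?_
  simp only [hwork, integral_neg]
  ring

end EnergyBalance

/-- Energy identity: for a smooth horizontally periodic solution `(u,B,P)` of the viscous
MHD system with the Navier-slip b.c. for `u` and the insulating b.c. for `B`, the energy
`E(t) = ∫_Q (|u|² + |B|²)` is differentiable with
`E′(t) = −2ν∫_Q |curl u|² − 2μ∫_Q |curl B|²`. -/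
theorem stmt_16 (nu mu : ℝ) (hnu : 0 ≤ nu) (hmu : 0 ≤ mu)
    (u B : ℝ → V3 → V3) (P : ℝ → V3 → ℝ)
    (hu : ContDiff ℝ (⊤ : ℕ∞) (Function.uncurry u))
    (hB : ContDiff ℝ (⊤ : ℕ∞) (Function.uncurry B))
    (hP : ContDiff ℝ (⊤ : ℕ∞) (Function.uncurry P))
    (huper : ∀ t, hperV (u t)) (hBper : ∀ t, hperV (B t)) (hPper : ∀ t, hperS (P t))
    (hmom : ∀ t x (i : Fin 3),
      deriv (fun s => u s x i) t - nu * vlap (u t) x i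
        + cross (vcurl (u t) x) (u t x) i + cross (B t x) (vcurl (B t) x) i
        + grad (P t) x i = 0)
    (hdivu : ∀ t x, vdiv (u t) x = 0)
    (hind : ∀ t x (i : Fin 3),
      deriv (fun s => B s x i) t - mu * vlap (B t) x i
        = vcurl (fun y => cross (u t y) (B t y)) x i)
    (hdivB : ∀ t x, vdiv (B t) x = 0)
    (hubc : ∀ t x, onBdry x →
      u t x 2 = 0 ∧ pd 2 (fun y => u t y 0) x = 0 ∧ pd 2 (fun y => u t y 1) x = 0)
    (hBbc : ∀ t x, onBdry x → B t x 0 = 0 ∧ B t x 1 = 0) :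
    ∀ t : ℝ, HasDerivAt
      (fun s => ∫ x in Q3, (dot (u s x) (u s x) + dot (B s x) (B s x)))
      (-2 * nu * (∫ x in Q3, dot (vcurl (u t) x) (vcurl (u t) x))
        - 2 * mu * (∫ x in Q3, dot (vcurl (B t) x) (vcurl (B t) x))) t := fun t =>
  stmt_16_general nu mu (contDiff_infty.1 hu 1)
    (contDiff_infty.1 (contDiff_slice_of_uncurry hu t) 2) (contDiff_infty.1 hB 1)
    (contDiff_infty.1 (contDiff_slice_of_uncurry hB t) 2)
    (contDiff_infty.1 (contDiff_slice_of_uncurry hP t) 1) (huper t) (hBper t) (hPper t)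
    (hmom t) (hdivu t) (hind t) (hdivB t) (hubc t) (hBbc t)
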